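/- Let X be a finite-dimensional real Banach space. Then every y ∈ S_X is C-approximately right-symmetric (i.e., for each y ∈ S_X there exists ε_y ∈ [0,1) such that for all z ∈ X, z ⊥_B y implies y ⊥_B^{ε_y} z) if and only if every x ∈ S_X has the local property (P). -/

import Mathlib

/-!
Everything rests on the dual description of approximate orthogonality: for `y ≠ 0` and `ε ≥ 0`,
`y ⊥_B^ε z` holds iff some `f ∈ J(y)` satisfies `|f z| ≤ ε ‖z‖`. For `ε = 0` this is James'
theorem, obtained by norming the class of `y` in `E ⧸ ℝ z`; the general case is James' theorem for
`(y, 0)` and `(z, ε ‖z‖)` in the `ℓ¹`-sum `E ⊕ ℝ`.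

Property (P) at a unit vector `x` says that whenever `x ⊥_B y` with `‖y‖ = 1`, some `f ∈ J(y)` has
`|f x| < 1`. Right-symmetry at `y` asks for the same for all such `x`, but with a bound `ε < 1`
uniform in `x`; compactness of the set of unit vectors orthogonal to `y` closes the gap.
-/

open Set Metric

section Defs

variable {E : Type*} [NormedAddCommGroup E] [NormedSpace ℝ E]

/-- Birkhoff-James orthogonality: `x ⊥_B y` iff `‖x + t • y‖ ≥ ‖x‖` for all real `t`. -/
def BJOrth (x y : E) : Prop := ∀ t : ℝ, ‖x‖ ≤ ‖x + t • y‖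

/-- Dragomir-type approximate orthogonality: `x ⊥_D^ε y` iff
`‖x + t • y‖ ≥ √(1 - ε²) ‖x‖` for all real `t`. -/
def DOrth (ε : ℝ) (x y : E) : Prop :=
  ∀ t : ℝ, Real.sqrt (1 - ε ^ 2) * ‖x‖ ≤ ‖x + t • y‖

/-- Chmieliński-type approximate orthogonality: `x ⊥_B^ε y` iff
`‖x + t • y‖² ≥ ‖x‖² - 2 ε ‖x‖ ‖t • y‖` for all real `t`. -/
def BOrth (ε : ℝ) (x y : E) : Prop :=
  ∀ t : ℝ, ‖x‖ ^ 2 - 2 * ε * ‖x‖ * ‖t • y‖ ≤ ‖x + t • y‖ ^ 2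

/-- The set of supporting functionals at `x`. -/
def SuppJ (x : E) : Set (E →L[ℝ] ℝ) := {f | ‖f‖ = 1 ∧ f x = ‖x‖}

/-- The local property (P) at `x`: there is no unit vector `y` with `x ⊥_B y` such that
every supporting functional of `y` (or its negative) supports `x`. -/
def LocalP (x : E) : Prop :=
  ¬ ∃ y : E, ‖y‖ = 1 ∧ BJOrth x y ∧ ∀ f ∈ SuppJ y, f ∈ SuppJ x ∨ -f ∈ SuppJ x

end Defs

section

variable {E : Type*} [NormedAddCommGroup E] [NormedSpace ℝ E] {x y : E} {f : E →L[ℝ] ℝ} {ε : ℝ}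

lemma abs_apply_le_norm (hf : ‖f‖ ≤ 1) (x : E) : |f x| ≤ ‖x‖ := by
  simpa only [Real.norm_eq_abs, one_mul] using f.le_of_opNorm_le hf x

lemma mem_suppJ_of_norm_le_one (hx : x ≠ 0) (hf : ‖f‖ ≤ 1) (hfx : f x = ‖x‖) : f ∈ SuppJ x := by
  refine ⟨hf.antisymm (one_le_of_le_mul_right₀ (norm_pos_iff.2 hx) ?_), hfx⟩
  simpa only [hfx, norm_norm] using f.le_opNorm x

lemma BJOrth.smul_left (h : BJOrth x y) (c : ℝ) : BJOrth (c • x) y := by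
  rcases eq_or_ne c 0 with rfl | hc
  · simp [BJOrth]
  intro t
  have hscale : c • x + t • y = c • (x + (t / c) • y) := by
    rw [smul_add, smul_smul, mul_div_cancel₀ t hc]
  rw [hscale, norm_smul, norm_smul]
  exact mul_le_mul_of_nonneg_left (h _) (norm_nonneg c)

lemma isClosed_setOf_bjOrth_left (y : E) : IsClosed {x | BJOrth x y} := by
  simp only [BJOrth, ofPred_forall]
  exact isClosed_iInter fun t ↦ isClosed_le (by fun_prop) (by fun_prop)

lemma BJOrth.norm_mk_span_singleton (h : BJOrth x y) :
    ‖(Submodule.Quotient.mk x : E ⧸ ℝ ∙ y)‖ = ‖x‖ := by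
  refine (Submodule.Quotient.norm_mk_le _ x).antisymm (QuotientAddGroup.le_norm_iff.2 ?_)
  intro m hm
  obtain ⟨t, ht⟩ := Submodule.mem_span_singleton.1 ((Submodule.Quotient.eq (ℝ ∙ y)).1 hm)
  rw [← sub_add_cancel m x, ← ht, add_comm]
  exact h t

lemma BJOrth.exists_mem_suppJ_apply_eq_zero (h : BJOrth x y) (hx : x ≠ 0) :
    ∃ f ∈ SuppJ x, f y = 0 := by
  obtain ⟨g, hg, hgx⟩ := exists_dual_vector'' ℝ (Submodule.Quotient.mk x : E ⧸ ℝ ∙ y)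
  refine ⟨g ∘L (ℝ ∙ y).mkQL, mem_suppJ_of_norm_le_one hx ?_ ?_, ?_⟩
  · refine ContinuousLinearMap.opNorm_le_bound _ zero_le_one fun v ↦ ?_
    exact g.le_of_opNorm_le_of_le hg (Submodule.Quotient.norm_mk_le _ v)
  · simpa [h.norm_mk_span_singleton] using hgx
  · have hy : (Submodule.Quotient.mk y : E ⧸ ℝ ∙ y) = 0 :=
      (Submodule.Quotient.mk_eq_zero _).2 (Submodule.mem_span_singleton_self y)
    simp [hy]

lemma norm_add_smul_le (x v : E) {s : ℝ} (hs0 : 0 ≤ s) (hs1 : s ≤ 1) :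
    ‖x + s • v‖ ≤ ‖x‖ - s * (‖x‖ - ‖x + v‖) := by
  have hcomb : x + s • v = (1 - s) • x + s • (x + v) := by module
  calc ‖x + s • v‖ ≤ ‖(1 - s) • x‖ + ‖s • (x + v)‖ := hcomb ▸ norm_add_le _ _
    _ = ‖x‖ - s * (‖x‖ - ‖x + v‖) := by
      rw [norm_smul_of_nonneg (sub_nonneg.2 hs1), norm_smul_of_nonneg hs0]
      ring

/-- Along the segment from `x` to `x + t • y` the norm is convex, so the squared inequality, which
is only linear to first order at `x`, already gives the linear one globally. -/
lemma BOrth.norm_sub_le (h : BOrth ε x y) (hx : x ≠ 0) (t : ℝ) :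
    ‖x‖ - ε * ‖t • y‖ ≤ ‖x + t • y‖ := by
  set d := ‖x‖ - ‖x + t • y‖
  have hsmall : ∀ s ∈ Ioc (0 : ℝ) 1, 2 * ‖x‖ * (d - ε * ‖t • y‖) ≤ s * d ^ 2 := by
    rintro s ⟨hs0, hs1⟩
    have hlower := h (s * t)
    rw [mul_smul, norm_smul_of_nonneg hs0.le] at hlower
    have hupper : ‖x + s • t • y‖ ^ 2 ≤ (‖x‖ - s * d) ^ 2 :=
      pow_le_pow_left₀ (norm_nonneg _) (norm_add_smul_le x (t • y) hs0.le hs1) 2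
    refine le_of_mul_le_mul_left ?_ hs0
    linarith
  have hlim : Filter.Tendsto (fun s : ℝ ↦ s * d ^ 2) (nhdsWithin 0 (Ioi 0)) (nhds 0) :=
    tendsto_nhdsWithin_of_tendsto_nhds (Continuous.tendsto' (by fun_prop) 0 0 (zero_mul _))
  have hle : 2 * ‖x‖ * (d - ε * ‖t • y‖) ≤ 0 :=
    ge_of_tendsto hlim (Filter.eventually_of_mem (Ioc_mem_nhdsGT zero_lt_one) hsmall)
  have hpos : 0 < 2 * ‖x‖ := by positivity
  linarith [nonpos_of_mul_nonpos_right hle hpos]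

lemma bOrth_of_norm_sub_le (h : ∀ t : ℝ, ‖x‖ - ε * ‖t • y‖ ≤ ‖x + t • y‖) : BOrth ε x y := by
  intro t
  calc ‖x‖ ^ 2 - 2 * ε * ‖x‖ * ‖t • y‖ = 2 * ‖x‖ * (‖x‖ - ε * ‖t • y‖) - ‖x‖ ^ 2 := by ring
    _ ≤ 2 * ‖x‖ * ‖x + t • y‖ - ‖x‖ ^ 2 := by gcongr; exact h t
    _ ≤ ‖x + t • y‖ ^ 2 := by linarith [two_mul_le_add_sq ‖x‖ ‖x + t • y‖]

lemma bOrth_of_mem_suppJ (hf : f ∈ SuppJ x) (hfy : |f y| ≤ ε * ‖y‖) : BOrth ε x y := by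
  refine bOrth_of_norm_sub_le fun t ↦ ?_
  have hfty : |f (t • y)| ≤ ε * ‖t • y‖ := by
    rw [map_smul, smul_eq_mul, abs_mul, norm_smul, Real.norm_eq_abs, mul_left_comm]
    gcongr
  calc ‖x‖ - ε * ‖t • y‖ ≤ f x + f (t • y) := by linarith [hf.2, neg_le_of_abs_le hfty]
    _ = f (x + t • y) := (map_add f _ _).symm
    _ ≤ ‖x + t • y‖ := (le_abs_self _).trans (abs_apply_le_norm hf.1.le _)

/-- In the `ℓ¹`-sum `E ⊕ ℝ`, approximate orthogonality of `x` to `y` becomes exact orthogonality of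
`(x, 0)` to `(y, ε * ‖y‖)`. -/
lemma BOrth.bjOrth_toLp (h : BOrth ε x y) (hε : 0 ≤ ε) (hx : x ≠ 0) :
    BJOrth (WithLp.toLp 1 (x, (0 : ℝ))) (WithLp.toLp 1 (y, ε * ‖y‖)) := by
  intro t
  have hnorm : ‖WithLp.toLp 1 (x, (0 : ℝ)) + t • WithLp.toLp 1 (y, ε * ‖y‖)‖ =
      ‖x + t • y‖ + ε * ‖t • y‖ := by
    simp [WithLp.prod_norm_eq_of_L1, norm_smul, abs_of_nonneg hε, mul_left_comm]
  rw [WithLp.norm_toLp_fst, hnorm]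
  linarith [h.norm_sub_le hx t]

lemma BOrth.exists_mem_suppJ_abs_apply_le (h : BOrth ε x y) (hε : 0 ≤ ε) (hx : x ≠ 0) :
    ∃ f ∈ SuppJ x, |f y| ≤ ε * ‖y‖ := by
  have hx' : WithLp.toLp 1 (x, (0 : ℝ)) ≠ 0 := by simpa using hx
  obtain ⟨g, ⟨hg, hgx⟩, hgy⟩ := (h.bjOrth_toLp hε hx).exists_mem_suppJ_apply_eq_zero hx'
  let f : E →L[ℝ] ℝ := g ∘L
    (WithLp.prodContinuousLinearEquiv 1 ℝ E ℝ).symm.toContinuousLinearMap ∘L .inl ℝ E ℝ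
  have hf (v : E) : f v = g (WithLp.toLp 1 (v, 0)) := rfl
  refine ⟨f, mem_suppJ_of_norm_le_one hx ?_ ?_, ?_⟩
  · refine ContinuousLinearMap.opNorm_le_bound _ zero_le_one fun v ↦ ?_
    simpa [hf, WithLp.norm_toLp_fst] using abs_apply_le_norm hg.le (WithLp.toLp 1 (v, (0 : ℝ)))
  · rw [hf, hgx, WithLp.norm_toLp_fst]
  · have hsplit : WithLp.toLp 1 (y, (0 : ℝ)) =
        WithLp.toLp 1 (y, ε * ‖y‖) - WithLp.toLp 1 (0, ε * ‖y‖) := by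
      simp [← WithLp.toLp_sub]
    rw [hf, hsplit, map_sub, hgy, zero_sub, abs_neg]
    refine (abs_apply_le_norm hg.le _).trans_eq ?_
    rw [WithLp.norm_toLp_snd, Real.norm_of_nonneg (by positivity)]

lemma localP_iff :
    LocalP x ↔ ∀ y, ‖y‖ = 1 → BJOrth x y → ∃ f ∈ SuppJ y, |f x| < ‖x‖ := by
  have hsupp {f : E →L[ℝ] ℝ} (hf : ‖f‖ = 1) : (f ∈ SuppJ x ∨ -f ∈ SuppJ x) ↔ ‖x‖ ≤ |f x| := by
    rw [(abs_apply_le_norm hf.le x).ge_iff_eq', eq_comm, abs_eq (norm_nonneg x)]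
    simp [SuppJ, hf, neg_eq_iff_eq_neg]
  simp only [LocalP, not_exists, not_and, not_forall]
  refine forall₃_congr fun y _ _ ↦ exists_congr fun f ↦ ?_
  rw [exists_prop]
  exact and_congr_right fun hf ↦ by rw [hsupp hf.1, not_le]

/-- `y` is C-approximately right-symmetric: Birkhoff-James orthogonality to `y` reverses to
Chmieliński's approximate orthogonality, with a constant `ε < 1` depending only on `y`. -/
def ApproxRightSymm (y : E) : Prop :=
  ∃ ε ∈ Ico (0 : ℝ) 1, ∀ z : E, BJOrth z y → BOrth ε y z

lemma ApproxRightSymm.exists_mem_suppJ_abs_apply_lt (h : ApproxRightSymm y) (hy : y ≠ 0)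
    (hx : x ≠ 0) (hxy : BJOrth x y) : ∃ f ∈ SuppJ y, |f x| < ‖x‖ := by
  obtain ⟨ε, ⟨hε0, hε1⟩, hε⟩ := h
  obtain ⟨f, hf, hfx⟩ := (hε x hxy).exists_mem_suppJ_abs_apply_le hε0 hy
  exact ⟨f, hf, hfx.trans_lt (mul_lt_of_lt_one_left (norm_pos_iff.2 hx) hε1)⟩

lemma approxRightSymm_of_forall_sphere (hε : ε ∈ Ico (0 : ℝ) 1)
    (h : ∀ x ∈ sphere (0 : E) 1, BJOrth x y → ∃ f ∈ SuppJ y, |f x| ≤ ε) :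
    ApproxRightSymm y := by
  refine ⟨ε, hε, fun z hz ↦ ?_⟩
  rcases eq_or_ne z 0 with rfl | hz0
  · simp [BOrth]
  obtain ⟨f, hf, hfz⟩ := h (‖z‖⁻¹ • z) (by simp [norm_smul, hz0]) (hz.smul_left _)
  refine bOrth_of_mem_suppJ hf ?_
  rwa [map_smul, smul_eq_mul, abs_mul, abs_inv, abs_norm,
    inv_mul_le_iff₀' (norm_pos_iff.2 hz0)] at hfz

end

lemma exists_lt_forall_exists_lt_of_isCompact {α β ι : Type*} [TopologicalSpace α] [LinearOrder β]
    [DenselyOrdered β] [NoMinOrder β] {K : Set α} (hK : IsCompact K) {u : ι → α → β}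
    (hu : ∀ i, UpperSemicontinuous (u i)) {a : β} (h : ∀ x ∈ K, ∃ i, u i x < a) :
    ∃ b < a, ∀ x ∈ K, ∃ i, u i x < b := by
  let U (b : Iio a) : Set α := ⋃ i, u i ⁻¹' Iio b.1
  have hopen (b : Iio a) : IsOpen (U b) := isOpen_iUnion fun i ↦ (hu i).isOpen_preimage b.1
  have hmono : Monotone U := fun b c hbc ↦ iUnion_mono fun i ↦ preimage_mono (Iio_subset_Iio hbc)
  have hcover : K ⊆ ⋃ b, U b := by
    intro x hx
    obtain ⟨i, hi⟩ := h x hx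
    obtain ⟨b, hxb, hba⟩ := exists_between hi
    exact mem_iUnion.2 ⟨⟨b, hba⟩, mem_iUnion.2 ⟨i, hxb⟩⟩
  obtain ⟨b, hKb⟩ := hK.elim_directed_cover U hopen hcover hmono.directed_le
  refine ⟨b, b.2, fun x hx ↦ ?_⟩
  obtain ⟨i, hi⟩ := mem_iUnion.1 (hKb hx)
  exact ⟨i, hi⟩

lemma approxRightSymm_iff {E : Type*} [NormedAddCommGroup E] [NormedSpace ℝ E] [ProperSpace E]
    {y : E} (hy : y ≠ 0) :
    ApproxRightSymm y ↔ ∀ x, ‖x‖ = 1 → BJOrth x y → ∃ f ∈ SuppJ y, |f x| < ‖x‖ := by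
  refine ⟨fun h x hx ↦ h.exists_mem_suppJ_abs_apply_lt hy (norm_ne_zero_iff.1 (by simp [hx])),
    fun h ↦ ?_⟩
  have hK : IsCompact (sphere (0 : E) 1 ∩ {x | BJOrth x y}) :=
    (isCompact_sphere 0 1).inter_right (isClosed_setOf_bjOrth_left y)
  obtain ⟨ε, hε1, hε⟩ := exists_lt_forall_exists_lt_of_isCompact hK
    (u := fun (f : SuppJ y) x ↦ |f.1 x|) (a := 1)
    (fun f ↦ f.1.continuous.abs.upperSemicontinuous) (fun x ⟨hx, hxy⟩ ↦ by
      rw [mem_sphere_zero_iff_norm] at hx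
      simpa [hx] using h x hx hxy)
  -- `ε` may be negative when no unit vector is orthogonal to `y`.
  refine approxRightSymm_of_forall_sphere (ε := max ε 0) ⟨le_max_right _ _, by simpa using hε1⟩
    fun x hx hxy ↦ ?_
  obtain ⟨f, hfx⟩ := hε x ⟨hx, hxy⟩
  exact ⟨f, f.2, hfx.le.trans (le_max_left _ _)⟩

theorem stmt_13 {X : Type*} [NormedAddCommGroup X] [NormedSpace ℝ X]
    [FiniteDimensional ℝ X] :
    (∀ y : X, ‖y‖ = 1 → ∃ ε ∈ Set.Ico (0 : ℝ) 1, ∀ z : X, BJOrth z y → BOrth ε y z) ↔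
    (∀ x : X, ‖x‖ = 1 → LocalP x) := by
  have approxRightSymm_iff_of_unit (y : X) (hy : ‖y‖ = 1) :=
    approxRightSymm_iff (norm_ne_zero_iff.1 (hy.trans_ne one_ne_zero))
  constructor
  · intro h x hx
    exact localP_iff.2 fun y hy hxy ↦ (approxRightSymm_iff_of_unit y hy).1 (h y hy) x hx hxy
  · intro h y hy
    exact (approxRightSymm_iff_of_unit y hy).2 fun x hx hxy ↦ localP_iff.1 (h x hx) y hy hxy
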